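/- arXiv:1705.06434 — 5 statements merged into one kernel-verified Lean document; each statement's English description precedes it below -/
import Mathlib

section
/- Let n, m, c, M be nonnegative integers with M ≥ n + m. Then in ℤ[q] one has Σ_{i=0}^{c} q^{i(m+n+1)} · [M−m−n+i−1 choose i] · [n+c−i choose n] · [n+m+c−i choose m] = [n+m choose n] · [M+c choose c]. -/
/-!
Statement 0: a q-binomial identity (paper's Lemma on trivalent trees).
We work in the field ℚ(q) of rational functions (`RatFunc ℚ`), where the quantum
integer, quantum factorial and Gaussian binomial coefficient are defined by the
usual formulas.  All quantities appearing are in fact polynomials in q, so the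
identity in ℚ(q) is equivalent to the identity in ℤ[q].
-/

open scoped BigOperators

noncomputable section

/-- The field ℚ(q). -/
abbrev K : Type := RatFunc ℚ

/-- The variable q. -/
def qq : K := RatFunc.X

/-- The quantum integer [n] = 1 + q + ⋯ + q^{n-1}. -/
def qint (n : ℕ) : K := ∑ i ∈ Finset.range n, qq ^ i

/-- The quantum factorial [n]! = [1][2]⋯[n]. -/
def qfact (n : ℕ) : K := ∏ i ∈ Finset.range n, qint (i + 1)

/-- The Gaussian binomial coefficient [n choose k] = [n]!/([k]!·[n-k]!),
with the convention that it is 0 when k > n. -/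
def qbinom (n k : ℕ) : K :=
  if k ≤ n then qfact n / (qfact k * qfact (n - k)) else 0

/-!
Write `{n, k}` for `[n + k - 1 choose k]`, the coefficient of `z ^ k` in
`∏_{j < n} 1 / (1 - q ^ j z)`. For `n = A + N`, the last `A` factors form the same
product at `q ^ N z`, which gives the `q`-Vandermonde convolution
`∑_{i + j = c} q ^ (i N) {A, i} {N, j} = {A + N, c}`. In the theorem, the two binomials
`[n + c - i choose n] [n + m + c - i choose m]` regroup, as a `q`-trinomial coefficient, into
`[n + m choose n] {n + m + 1, c - i}`, so the sum is this convolution with `N = n + m + 1`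
and `A = M - m - n`.
-/

theorem qint_add (a b : ℕ) : qint (a + b) = qint a + qq ^ a * qint b := by
  simp only [qint, Finset.sum_range_add, Finset.mul_sum, pow_add]

theorem qint_succ_ne_zero (n : ℕ) : qint (n + 1) ≠ 0 := by
  have qint_eq_algebraMap : qint (n + 1) = algebraMap (Polynomial ℚ) K
      (∑ i ∈ Finset.range (n + 1), Polynomial.X ^ i) := by
    simp [qint, qq]
  rw [qint_eq_algebraMap, Ne, map_eq_zero_iff _ (RatFunc.algebraMap_injective ℚ)]
  intro sum_eq_zero
  have eval_one : (n : ℚ) + 1 = 0 := by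
    simpa [Polynomial.eval_finsetSum] using congrArg (Polynomial.eval 1) sum_eq_zero
  exact n.cast_add_one_ne_zero eval_one

theorem qfact_zero : qfact 0 = 1 :=
  Finset.prod_range_zero _

theorem qfact_succ (n : ℕ) : qfact (n + 1) = qfact n * qint (n + 1) :=
  Finset.prod_range_succ _ _

theorem qfact_ne_zero (n : ℕ) : qfact n ≠ 0 :=
  Finset.prod_ne_zero_iff.2 fun i _ => qint_succ_ne_zero i

theorem add_qbinom (a k : ℕ) : qbinom (a + k) k = qfact (a + k) / (qfact k * qfact a) := by
  simp [qbinom]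

theorem qbinom_zero_right (n : ℕ) : qbinom n 0 = 1 := by
  simp [qbinom, qfact_zero, qfact_ne_zero]

theorem qbinom_self (n : ℕ) : qbinom n n = 1 := by
  simp [qbinom, qfact_zero, qfact_ne_zero]

theorem qbinom_eq_zero_of_lt {n k : ℕ} (h : n < k) : qbinom n k = 0 :=
  if_neg h.not_ge

theorem qbinom_add_succ (a k : ℕ) :
    qbinom (a + k + 1) (k + 1) = qbinom (a + k) (k + 1) + qq ^ a * qbinom (a + k) k := by
  cases a with
  | zero => simp [qbinom_self, qbinom_eq_zero_of_lt]
  | succ a =>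
    have qint_split : qint (a + 1 + k + 1) = qint (a + 1) + qq ^ (a + 1) * qint (k + 1) :=
      qint_add (a + 1) (k + 1)
    have left_eq := add_qbinom (a + 1) (k + 1)
    have upper_eq := add_qbinom a (k + 1)
    rw [← add_assoc] at left_eq
    rw [← add_assoc, add_right_comm] at upper_eq
    rw [left_eq, upper_eq, add_qbinom, qfact_succ (a + 1 + k), qint_split, qfact_succ a,
      qfact_succ k]
    have := qfact_ne_zero a
    have := qfact_ne_zero k
    have := qint_succ_ne_zero a
    have := qint_succ_ne_zero k
    field_simp

theorem add_qbinom_mul_add_add_qbinom (d n m : ℕ) :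
    qbinom (d + n) n * qbinom (d + n + m) m = qbinom (m + n) n * qbinom (m + n + d) d := by
  rw [add_qbinom, add_qbinom, add_qbinom, add_qbinom, show d + n + m = m + n + d by ring]
  have := qfact_ne_zero (d + n)
  have := qfact_ne_zero (m + n)
  field_simp

/-- The `q`-analogue of `Nat.multichoose`: the Gaussian binomial `[n + k - 1 choose k]`, which is
the coefficient of `z ^ k` in `∏_{j < n} 1 / (1 - q ^ j z)`. The truncated subtraction only
matters at `n = k = 0`, where it gives the value `1` that this generating function requires. -/
def qmultichoose (n k : ℕ) : K :=
  qbinom (n + k - 1) k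

theorem qmultichoose_zero_right (n : ℕ) : qmultichoose n 0 = 1 :=
  qbinom_zero_right _

theorem qmultichoose_zero_succ (k : ℕ) : qmultichoose 0 (k + 1) = 0 :=
  qbinom_eq_zero_of_lt (by lia)

theorem qmultichoose_succ_left (n k : ℕ) : qmultichoose (n + 1) k = qbinom (n + k) k := by
  rw [qmultichoose, Nat.add_right_comm, Nat.add_sub_cancel]

theorem qmultichoose_succ_succ (n k : ℕ) :
    qmultichoose (n + 1) (k + 1) =
      qmultichoose n (k + 1) + qq ^ n * qmultichoose (n + 1) k := by
  rw [qmultichoose_succ_left, qmultichoose_succ_left]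
  exact qbinom_add_succ n k

theorem sum_antidiagonal_succ_qmultichoose_succ_mul (A N c : ℕ) :
    ∑ p ∈ Finset.HasAntidiagonal.antidiagonal (c + 1),
        qq ^ (p.1 * N) * qmultichoose (A + 1) p.1 * qmultichoose N p.2 =
      ∑ p ∈ Finset.HasAntidiagonal.antidiagonal (c + 1),
          qq ^ (p.1 * N) * qmultichoose A p.1 * qmultichoose N p.2 +
        qq ^ (A + N) * ∑ p ∈ Finset.HasAntidiagonal.antidiagonal c,
          qq ^ (p.1 * N) * qmultichoose (A + 1) p.1 * qmultichoose N p.2 := by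
  rw [Finset.Nat.sum_antidiagonal_succ, Finset.Nat.sum_antidiagonal_succ, Finset.mul_sum,
    add_assoc, ← Finset.sum_add_distrib]
  simp only [qmultichoose_zero_right, qmultichoose_succ_succ]
  congr 1
  refine Finset.sum_congr rfl fun p _ => ?_
  ring

theorem sum_antidiagonal_qmultichoose_mul (A N c : ℕ) :
    ∑ p ∈ Finset.HasAntidiagonal.antidiagonal c,
        qq ^ (p.1 * N) * qmultichoose A p.1 * qmultichoose N p.2 =
      qmultichoose (A + N) c := by
  induction A generalizing c with
  | zero =>
    cases c <;>
      simp [Finset.Nat.sum_antidiagonal_succ, qmultichoose_zero_right, qmultichoose_zero_succ]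
  | succ A sum_A =>
    induction c with
    | zero => simp [qmultichoose_zero_right]
    | succ c sum_c =>
      rw [sum_antidiagonal_succ_qmultichoose_succ_mul, sum_A, sum_c, Nat.add_right_comm A 1 N,
        qmultichoose_succ_succ]

theorem stmt_0 (n m c M : ℕ) (hM : n + m ≤ M) :
    ∑ i ∈ Finset.range (c + 1),
        qq ^ (i * (m + n + 1)) * qbinom (M - m - n + i - 1) i *
          qbinom (n + c - i) n * qbinom (n + m + c - i) m
      = qbinom (n + m) n * qbinom (M + c) c := by
  have regroup (i : ℕ) (hi : i ≤ c) :
      qbinom (n + c - i) n * qbinom (n + m + c - i) m =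
        qbinom (n + m) n * qmultichoose (m + n + 1) (c - i) := by
    rw [qmultichoose_succ_left, show n + c - i = c - i + n by lia,
      show n + m + c - i = c - i + n + m by lia, add_comm n m, add_qbinom_mul_add_add_qbinom]
  have convolution := sum_antidiagonal_qmultichoose_mul (M - m - n) (m + n + 1) c
  rw [Finset.Nat.sum_antidiagonal_eq_sum_range_succ_mk,
    show M - m - n + (m + n + 1) = M + 1 by lia, qmultichoose_succ_left] at convolution
  rw [← convolution, Finset.mul_sum]
  refine Finset.sum_congr rfl fun i hi => ?_
  rw [mul_assoc, regroup i (Finset.mem_range_succ_iff.1 hi)]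
  exact mul_left_comm _ _ _
end
end

section
/- For all integers M, N ≥ 0, the rational function P(M,N) is in fact a polynomial in q with nonnegative integer coefficients. -/
open scoped BigOperators

noncomputable section

/-- a_{(2m-1,N)} = [N+2m]/[2m] and a_{(2m,N)} = [2N+2m]/[N+2m]:
for odd j = 2m-1 this is [N+j+1]/[j+1], for even j = 2m this is [2N+j]/[N+j]. -/
def aB (j N : ℕ) : K :=
  if Odd j then qint (N + j + 1) / qint (j + 1) else qint (2 * N + j) / qint (N + j)

/-- P(M,N) = ∏_{i=1}^{N}(1+q^i) · ∏_{j=1}^{M} a_{(j,N)}. -/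
def P (M N : ℕ) : K :=
  (∏ i ∈ Finset.range N, (1 + qq ^ (i + 1))) * ∏ j ∈ Finset.range M, aB (j + 1) N

/-!
Write `F n = (1 + q) * (1 + q ^ 2) * ⋯ * (1 + q ^ n)` and let `G n k` be the Gaussian binomial
coefficient in the variable `q ^ 2`. The factors with index `2k - 1` and `2k` multiply to
`[2N + 2k] / [2k]`, so `P (2k) N = F N * G (N + k) k`.

For odd first argument, split `[N + 2k + 2] = [2k + 2] + q ^ (2k + 2) * [N]`; the factor `1 + q ^ N`
of `F N` turns `[N]` into `[2N]`, and `G (N + k) k * [2N] / [2k + 2] = G (N + k) (k + 1)`. Hence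
`P (2k + 1) N = F N * G (N + k) k + q ^ (2k + 2) * F (N - 1) * G (N + k) (k + 1)`.

Pascal's rule builds Gaussian binomials from the variable by additions and multiplications only, so
both right-hand sides are manifestly polynomials with nonnegative integer coefficients.
-/

open Finset

section GaussBinom

/-- The `x`-analogue `[n]_x = 1 + x + ⋯ + x ^ (n - 1)` of `n` in an arbitrary semiring. The base is
a parameter because both `q` and `q ^ 2` occur; `qint` is the case `x = q`. -/
def qNumber {R : Type*} [Semiring R] (x : R) (n : ℕ) : R := ∑ i ∈ range n, x ^ i

/-- The Gaussian binomial coefficient with base `x`, defined by the `q`-Pascal rule instead of a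
quotient of factorials, so that it makes sense, without subtraction or division, in any semiring. -/
def gaussBinom {R : Type*} [Semiring R] (x : R) : ℕ → ℕ → R
  | _, 0 => 1
  | 0, _ + 1 => 0
  | n + 1, k + 1 => gaussBinom x n k + x ^ (k + 1) * gaussBinom x n (k + 1)

section Semiring

variable {R : Type*} [Semiring R] (x : R)

@[simp]
lemma qNumber_zero : qNumber x 0 = 0 := sum_range_zero _

@[simp]
lemma qNumber_one : qNumber x 1 = 1 := by simp [qNumber]

lemma qNumber_add (m n : ℕ) : qNumber x (m + n) = qNumber x m + x ^ m * qNumber x n := by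
  simp only [qNumber, sum_range_add, mul_sum, pow_add]

lemma qNumber_two_mul (n : ℕ) : qNumber x (2 * n) = (1 + x ^ n) * qNumber x n := by
  rw [two_mul, qNumber_add, add_mul, one_mul]

lemma qNumber_two_mul_eq_qNumber_sq (n : ℕ) :
    qNumber x (2 * n) = (1 + x) * qNumber (x ^ 2) n := by
  induction n with
  | zero => simp
  | succ n ih =>
    have qNumber_two : qNumber x 2 = 1 + x := by simp [qNumber, sum_range_succ]
    have pow_commute : Commute (x ^ (2 * n)) (1 + x) :=
      (Commute.one_right _).add_right (Commute.pow_self x _)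
    rw [mul_add_one, qNumber_add, qNumber_add, ih, qNumber_two, qNumber_one, mul_one, ← pow_mul,
      pow_commute.eq, ← mul_add]

@[simp]
lemma gaussBinom_zero_right (n : ℕ) : gaussBinom x n 0 = 1 := by cases n <;> rfl

lemma gaussBinom_succ_succ (n k : ℕ) :
    gaussBinom x (n + 1) (k + 1) = gaussBinom x n k + x ^ (k + 1) * gaussBinom x n (k + 1) :=
  rfl

lemma gaussBinom_eq_zero_of_lt {n k : ℕ} (h : n < k) : gaussBinom x n k = 0 := by
  induction n generalizing k with
  | zero => obtain ⟨k, rfl⟩ := Nat.exists_eq_add_one.2 h; rfl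
  | succ n ih =>
    obtain ⟨k, rfl⟩ := Nat.exists_eq_add_one.2 (Nat.zero_lt_of_lt h)
    rw [gaussBinom_succ_succ, ih (by lia), ih (by lia), mul_zero, add_zero]

variable {x} in
lemma gaussBinom_mem {S : Subsemiring R} (hx : x ∈ S) (n k : ℕ) : gaussBinom x n k ∈ S := by
  induction n generalizing k with
  | zero => cases k with
    | zero => exact one_mem S
    | succ k => exact zero_mem S
  | succ n ih => cases k with
    | zero => exact one_mem S
    | succ k => exact add_mem (ih k) (mul_mem (pow_mem hx _) (ih (k + 1)))

end Semiring

section CommSemiring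

variable {R : Type*} [CommSemiring R] (x : R)

lemma gaussBinom_succ_right_mul (n k : ℕ) :
    gaussBinom x n (k + 1) * qNumber x (k + 1) = gaussBinom x n k * qNumber x (n - k) := by
  induction n generalizing k with
  | zero => simp [gaussBinom_eq_zero_of_lt x k.succ_pos]
  | succ n ih =>
    cases k with
    | zero =>
      have h := ih 0
      simp only [zero_add, qNumber_one, mul_one, gaussBinom_zero_right, Nat.sub_zero, one_mul] at h
      rw [gaussBinom_succ_succ, zero_add, h, add_comm n, Nat.sub_zero, qNumber_add]
      simp
    | succ k =>
      rcases lt_or_ge k n with hkn | hnk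
      · obtain ⟨j, rfl⟩ := Nat.exists_eq_add_of_lt hkn
        have ih_right := ih (k + 1)
        have ih_left := ih k
        rw [show k + j + 1 - (k + 1) = j by lia] at ih_right
        rw [show k + j + 1 - k = j + 1 by lia] at ih_left
        rw [show k + j + 1 + 1 - (k + 1) = j + 1 by lia]
        have qNumber_split : qNumber x (k + 1 + 1) + x ^ (k + 1 + 1) * qNumber x j
            = qNumber x (k + 1) + x ^ (k + 1) * qNumber x (j + 1) := by
          rw [← qNumber_add, ← qNumber_add, add_assoc (k + 1), add_comm 1]
        set g := gaussBinom x (k + j + 1) (k + 1)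
        calc gaussBinom x (k + j + 1 + 1) (k + 1 + 1) * qNumber x (k + 1 + 1)
            = g * (qNumber x (k + 1 + 1) + x ^ (k + 1 + 1) * qNumber x j) := by
              rw [gaussBinom_succ_succ, add_mul, mul_assoc, ih_right]; ring
          _ = g * (qNumber x (k + 1) + x ^ (k + 1) * qNumber x (j + 1)) := by rw [qNumber_split]
          _ = gaussBinom x (k + j + 1 + 1) (k + 1) * qNumber x (j + 1) := by
              rw [gaussBinom_succ_succ, mul_add, ih_left]; ring
      · rw [gaussBinom_eq_zero_of_lt x (by lia), show n + 1 - (k + 1) = 0 by lia]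
        simp

lemma gaussBinom_succ_succ_mul (n k : ℕ) :
    gaussBinom x (n + 1) (k + 1) * qNumber x (k + 1) = gaussBinom x n k * qNumber x (n + 1) := by
  rcases le_or_gt k n with hkn | hnk
  · calc gaussBinom x (n + 1) (k + 1) * qNumber x (k + 1)
        = gaussBinom x n k * (qNumber x (k + 1) + x ^ (k + 1) * qNumber x (n - k)) := by
          rw [gaussBinom_succ_succ, add_mul, mul_assoc, gaussBinom_succ_right_mul]; ring
      _ = gaussBinom x n k * qNumber x (n + 1) := by
          rw [← qNumber_add, show k + 1 + (n - k) = n + 1 by lia]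
  · rw [gaussBinom_eq_zero_of_lt x hnk, gaussBinom_eq_zero_of_lt x (Nat.succ_lt_succ hnk),
      zero_mul, zero_mul]

lemma gaussBinom_sq_succ_right_mul (n k : ℕ) :
    gaussBinom (x ^ 2) n (k + 1) * qNumber x (2 * (k + 1))
      = gaussBinom (x ^ 2) n k * qNumber x (2 * (n - k)) := by
  simp only [qNumber_two_mul_eq_qNumber_sq, mul_left_comm _ (1 + x), gaussBinom_succ_right_mul]

lemma gaussBinom_sq_succ_succ_mul (n k : ℕ) :
    gaussBinom (x ^ 2) (n + 1) (k + 1) * qNumber x (2 * (k + 1))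
      = gaussBinom (x ^ 2) n k * qNumber x (2 * (n + 1)) := by
  simp only [qNumber_two_mul_eq_qNumber_sq, mul_left_comm _ (1 + x), gaussBinom_succ_succ_mul]

lemma prod_one_add_pow_mul_qNumber (n : ℕ) :
    (∏ i ∈ range n, (1 + x ^ (i + 1))) * qNumber x n
      = (∏ i ∈ range (n - 1), (1 + x ^ (i + 1))) * qNumber x (2 * n) := by
  cases n with
  | zero => simp
  | succ n => rw [prod_range_succ, mul_assoc, qNumber_two_mul, Nat.add_sub_cancel]

end CommSemiring

end GaussBinom

section ClosedForms

lemma qint_eq_qNumber (n : ℕ) : qint n = qNumber qq n := rfl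

lemma qint_ne_zero {n : ℕ} (hn : n ≠ 0) : qint n ≠ 0 := by
  have h := RatFunc.algebraMap_ne_zero (Polynomial.monic_geom_sum_X (R := ℚ) hn).ne_zero
  simpa [qint, qq] using h

lemma P_succ (M N : ℕ) : P (M + 1) N = P M N * aB (M + 1) N := by
  rw [P, P, prod_range_succ, mul_assoc]

lemma P_two_mul_add_one (k N : ℕ) :
    P (2 * k + 1) N = P (2 * k) N * (qint (N + 2 * (k + 1)) / qint (2 * (k + 1))) := by
  rw [P_succ, aB, if_pos (odd_two_mul_add_one k)]
  rfl

lemma P_two_mul_succ (k N : ℕ) :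
    P (2 * (k + 1)) N = P (2 * k) N * (qint (2 * (N + (k + 1))) / qint (2 * (k + 1))) := by
  have not_odd : ¬ Odd (2 * k + 1 + 1) := by
    rw [Nat.not_odd_iff_even]
    exact even_two_mul (k + 1)
  have numerator_ne_zero : qint (N + 2 * (k + 1)) ≠ 0 := qint_ne_zero (by lia)
  calc P (2 * (k + 1)) N
      = P (2 * k + 1) N * (qint (2 * (N + (k + 1))) / qint (N + 2 * (k + 1))) := by
        rw [mul_add_one 2 k, P_succ (2 * k + 1), aB, if_neg not_odd, mul_add 2 N]
        rfl
    _ = P (2 * k) N * (qint (2 * (N + (k + 1))) / qint (2 * (k + 1))) := by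
        rw [P_two_mul_add_one, mul_assoc, mul_comm (_ / _), div_mul_div_cancel₀ numerator_ne_zero]

theorem P_two_mul_eq_gaussBinom (k N : ℕ) :
    P (2 * k) N = (∏ i ∈ range N, (1 + qq ^ (i + 1))) * gaussBinom (qq ^ 2) (N + k) k := by
  induction k with
  | zero => simp [P]
  | succ k ih =>
    rw [P_two_mul_succ, ih, ← mul_div_assoc, div_eq_iff (qint_ne_zero (by lia)), mul_assoc,
      mul_assoc, qint_eq_qNumber, qint_eq_qNumber, ← add_assoc, gaussBinom_sq_succ_succ_mul]

-- At `N = 0` the truncated `N - 1` is harmless, since `gaussBinom (qq ^ 2) k (k + 1) = 0`.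
theorem P_two_mul_add_one_eq_gaussBinom (k N : ℕ) :
    P (2 * k + 1) N
      = (∏ i ∈ range N, (1 + qq ^ (i + 1))) * gaussBinom (qq ^ 2) (N + k) k
        + qq ^ (2 * (k + 1)) * ((∏ i ∈ range (N - 1), (1 + qq ^ (i + 1)))
          * gaussBinom (qq ^ 2) (N + k) (k + 1)) := by
  have gaussBinom_shift := gaussBinom_sq_succ_right_mul qq (N + k) k
  rw [Nat.add_sub_cancel] at gaussBinom_shift
  rw [P_two_mul_add_one, P_two_mul_eq_gaussBinom, ← mul_div_assoc,
    div_eq_iff (qint_ne_zero (by lia)), qint_eq_qNumber, qint_eq_qNumber, add_comm N (2 * (k + 1)),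
    qNumber_add]
  linear_combination qq ^ (2 * (k + 1)) *
    (gaussBinom (qq ^ 2) (N + k) k * prod_one_add_pow_mul_qNumber qq N
      - (∏ i ∈ range (N - 1), (1 + qq ^ (i + 1))) * gaussBinom_shift)

end ClosedForms

section Positivity

/-- The subsemiring `ℕ[q]` of `ℚ(q)`: polynomials with nonnegative integer coefficients, encoded as
the image of `ℕ[X]`. -/
def natPolynomials : Subsemiring K :=
  ((algebraMap (Polynomial ℚ) K).comp (Polynomial.mapRingHom (Nat.castRingHom ℚ))).rangeS

lemma mem_natPolynomials {f : K} :
    f ∈ natPolynomials ↔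
      ∃ p : Polynomial ℕ, f = algebraMap (Polynomial ℚ) K (p.map (Nat.castRingHom ℚ)) := by
  simp only [natPolynomials, RingHom.mem_rangeS, RingHom.comp_apply, Polynomial.coe_mapRingHom,
    eq_comm]

lemma qq_mem_natPolynomials : qq ∈ natPolynomials :=
  mem_natPolynomials.2 ⟨Polynomial.X, by simp [qq]⟩

lemma prod_one_add_qq_pow_mem_natPolynomials (n : ℕ) :
    ∏ i ∈ range n, (1 + qq ^ (i + 1)) ∈ natPolynomials :=
  prod_mem fun _ _ => add_mem (one_mem _) (pow_mem qq_mem_natPolynomials _)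

lemma gaussBinom_qq_sq_mem_natPolynomials (n k : ℕ) : gaussBinom (qq ^ 2) n k ∈ natPolynomials :=
  gaussBinom_mem (pow_mem qq_mem_natPolynomials 2) n k

end Positivity

theorem stmt_6 (M N : ℕ) :
    ∃ p : Polynomial ℕ,
      P M N = algebraMap (Polynomial ℚ) K (p.map (Nat.castRingHom ℚ)) := by
  rw [← mem_natPolynomials]
  have product_mem := prod_one_add_qq_pow_mem_natPolynomials
  have binom_mem := gaussBinom_qq_sq_mem_natPolynomials
  obtain ⟨k, rfl | rfl⟩ := M.even_or_odd'
  · rw [P_two_mul_eq_gaussBinom]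
    exact mul_mem (product_mem N) (binom_mem _ _)
  · rw [P_two_mul_add_one_eq_gaussBinom]
    exact add_mem (mul_mem (product_mem N) (binom_mem _ _))
      (mul_mem (pow_mem qq_mem_natPolynomials _)
        (mul_mem (product_mem (N - 1)) (binom_mem _ _)))
end
end

section
/- Let N be an odd positive integer. The number of permutations w of {1, 2, …, N+1} satisfying w(2m−1) > w(2m) for all m with 2m ≤ N+1, w(2m) < w(2m+1) for all m with 2m+1 ≤ N+1, and w(2m) < w(2m+2) for all m with 2m+2 ≤ N+1, equals the double factorial N!! = N·(N−2)·(N−4)⋯1. -/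
/-!
In a word of even length satisfying the conditions, every letter other than the second one has a
smaller letter next to it or two places before it, so the least letter is the second one. Deleting
the first two letters of such a permutation of length `n + 2` and standardizing the rest gives such
a permutation of length `n`; conversely the first letter may be chosen freely among the `n + 1`
letters that are not the least. Hence passing from length `n` to `n + 2` multiplies the count by
`n + 1`.
-/

open scoped Nat

theorem card_subtype_prod {α β : Type*} (p : α → Prop) (q : β → Prop) :
    Nat.card {c : α × β // p c.1 ∧ q c.2} = Nat.card {a // p a} * Nat.card {b // q b} := by
  rw [Nat.card_congr Equiv.subtypeProdEquivProd, Nat.card_prod]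

/-- Down-up words `f 0 > f 1 < f 2 > ⋯` whose valleys `f 1, f 3, …` form an increasing sequence.
Positions start at `0`, so the valleys sit at odd positions. -/
def IsValleySortedDownUp {α : Type*} [LT α] {n : ℕ} (f : Fin n → α) : Prop :=
  (∀ i j : Fin n, (j : ℕ) = i + 1 → (Even (i : ℕ) → f j < f i) ∧ (Odd (i : ℕ) → f i < f j)) ∧
    ∀ i j : Fin n, (j : ℕ) = i + 2 → Odd (i : ℕ) → f i < f j

namespace IsValleySortedDownUp

variable {α β : Type*} {n : ℕ}

theorem strictMono_comp_iff [LinearOrder α] [Preorder β] {g : α → β} (hg : StrictMono g)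
    {f : Fin n → α} : IsValleySortedDownUp (g ∘ f) ↔ IsValleySortedDownUp f := by
  simp only [IsValleySortedDownUp, Function.comp_apply, hg.lt_iff_lt]

theorem cons_cons_iff [LT α] {a b : α} {f : Fin n → α} (hb : ∀ i, b < f i) :
    IsValleySortedDownUp (Fin.cons a (Fin.cons b f) : Fin (n + 2) → α) ↔
      b < a ∧ IsValleySortedDownUp f := by
  simp [IsValleySortedDownUp, Fin.forall_fin_succ, Nat.even_add_one, Nat.odd_add_one, hb, and_assoc]

theorem val_eq_one_of_forall_not_lt [LT α] (hn : Even n) {f : Fin n → α}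
    (hf : IsValleySortedDownUp f) {j : Fin n} (hj : ∀ i, ¬f i < f j) : (j : ℕ) = 1 := by
  rcases Nat.even_or_odd (j : ℕ) with j_even | j_odd
  · have succ_lt : (j : ℕ) + 1 < n := by grind
    exact absurd ((hf.1 j ⟨j + 1, succ_lt⟩ rfl).1 j_even) (hj _)
  · by_contra j_ne_one
    have two_le : 2 ≤ (j : ℕ) := by grind
    have sub_two_odd : Odd ((j : ℕ) - 2) := Nat.Odd.sub_even two_le j_odd even_two
    exact hj _ (hf.2 ⟨j - 2, by omega⟩ j (by simp [two_le]) sub_two_odd)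

end IsValleySortedDownUp

section ConsPerm

variable {n : ℕ}

/-- The permutation with one-line notation `v` followed by that of `s`, where the letters of `s`
are relabelled increasingly to avoid `v`. -/
def consPerm (v : Fin (n + 1)) (s : Equiv.Perm (Fin n)) : Equiv.Perm (Fin (n + 1)) :=
  v.cycleRange.symm * Equiv.Perm.decomposeFin.symm (0, s)

theorem coe_consPerm (v : Fin (n + 1)) (s : Equiv.Perm (Fin n)) :
    ⇑(consPerm v s) = Fin.cons v (v.succAbove ∘ s) := by
  ext i
  cases i using Fin.cases <;> simp [consPerm]

theorem consPerm_bijective :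
    Function.Bijective fun p : Fin (n + 1) × Equiv.Perm (Fin n) ↦ consPerm p.1 p.2 := by
  rw [Fintype.bijective_iff_injective_and_card]
  constructor
  · rintro ⟨v, s⟩ ⟨v', s'⟩ h
    have cons_eq := congrArg DFunLike.coe h
    simp only [coe_consPerm, Fin.cons_inj] at cons_eq
    obtain ⟨rfl, comp_eq⟩ := cons_eq
    rw [DFunLike.coe_injective (v.succAboveOrderEmb.injective.comp_left comp_eq)]
  · simp [Fintype.card_perm, Nat.factorial_succ]

theorem coe_consPerm_succ_consPerm_zero (v : Fin (n + 1)) (s : Equiv.Perm (Fin n)) :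
    ⇑(consPerm v.succ (consPerm 0 s)) =
      Fin.cons v.succ (Fin.cons 0 (Fin.succ ∘ v.succAbove ∘ s)) := by
  ext i
  cases i using Fin.cases with
  | zero => simp [coe_consPerm]
  | succ i => cases i using Fin.cases <;> simp [coe_consPerm]

theorem isValleySortedDownUp_consPerm_succ_consPerm_zero_iff {v : Fin (n + 1)}
    {s : Equiv.Perm (Fin n)} :
    IsValleySortedDownUp (consPerm v.succ (consPerm 0 s)) ↔ IsValleySortedDownUp s := by
  rw [coe_consPerm_succ_consPerm_zero,
    IsValleySortedDownUp.cons_cons_iff (by simp), and_iff_right (Fin.succ_pos v),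
    IsValleySortedDownUp.strictMono_comp_iff Fin.strictMono_succ,
    IsValleySortedDownUp.strictMono_comp_iff (Fin.strictMono_succAbove v)]

end ConsPerm

section Counting

variable {n : ℕ}

theorem IsValleySortedDownUp.apply_one_eq_zero (hn : Even n) {w : Equiv.Perm (Fin (n + 2))}
    (hw : IsValleySortedDownUp w) : w 1 = 0 := by
  have val_eq_one : (w.symm 0 : ℕ) = 1 :=
    hw.val_eq_one_of_forall_not_lt (hn.add even_two) (by simp)
  rw [← Equiv.eq_symm_apply]
  exact Fin.ext (by simp [val_eq_one])

theorem isValleySortedDownUp_consPerm_consPerm_iff (hn : Even n) {a : Fin (n + 2)}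
    {b : Fin (n + 1)} {s : Equiv.Perm (Fin n)} :
    IsValleySortedDownUp (consPerm a (consPerm b s)) ↔
      a ≠ 0 ∧ b = 0 ∧ IsValleySortedDownUp s := by
  constructor
  · intro hw
    have succAbove_eq_zero : a.succAbove b = 0 := by
      simpa only [← Fin.succ_zero_eq_one, coe_consPerm, Fin.cons_succ, Function.comp_apply,
        Fin.cons_zero] using hw.apply_one_eq_zero hn
    have a_ne_zero : a ≠ 0 := by
      rintro rfl
      exact Fin.succAbove_ne 0 b succAbove_eq_zero
    obtain rfl : b = 0 := (Fin.succAbove_eq_zero_iff a_ne_zero).1 succAbove_eq_zero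
    obtain ⟨v, rfl⟩ := Fin.exists_succ_eq.2 a_ne_zero
    exact ⟨a_ne_zero, rfl, isValleySortedDownUp_consPerm_succ_consPerm_zero_iff.1 hw⟩
  · rintro ⟨a_ne_zero, rfl, hs⟩
    obtain ⟨v, rfl⟩ := Fin.exists_succ_eq.2 a_ne_zero
    exact isValleySortedDownUp_consPerm_succ_consPerm_zero_iff.2 hs

theorem card_isValleySortedDownUp_add_two (hn : Even n) :
    Nat.card {w : Equiv.Perm (Fin (n + 2)) // IsValleySortedDownUp w} =
      (n + 1) * Nat.card {s : Equiv.Perm (Fin n) // IsValleySortedDownUp s} := by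
  let consConsEquiv : Fin (n + 2) × Fin (n + 1) × Equiv.Perm (Fin n) ≃ Equiv.Perm (Fin (n + 2)) :=
    ((Equiv.refl _).prodCongr (.ofBijective _ consPerm_bijective)).trans
      (.ofBijective _ consPerm_bijective)
  calc
    _ = Nat.card {p : Fin (n + 2) × Fin (n + 1) × Equiv.Perm (Fin n) //
          p.1 ≠ 0 ∧ p.2.1 = 0 ∧ IsValleySortedDownUp p.2.2} :=
      Nat.card_congr (consConsEquiv.subtypeEquiv fun _ ↦
        (isValleySortedDownUp_consPerm_consPerm_iff hn).symm).symm
    _ = Nat.card {a : Fin (n + 2) // a ≠ 0} * (Nat.card {b : Fin (n + 1) // b = 0} *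
          Nat.card {s : Equiv.Perm (Fin n) // IsValleySortedDownUp s}) := by
      rw [← card_subtype_prod, ← card_subtype_prod]
    _ = _ := by simp

-- At `n = 0` the truncated `n - 1` is `0`, and `0‼ = 1` counts the empty permutation.
theorem card_isValleySortedDownUp (hn : Even n) :
    Nat.card {w : Equiv.Perm (Fin n) // IsValleySortedDownUp w} = (n - 1)‼ := by
  induction n using Nat.twoStepInduction with
  | zero => simp [IsValleySortedDownUp]
  | one => simp at hn
  | more n ih _ =>
    have n_even : Even n := by simpa [Nat.even_add] using hn
    rw [card_isValleySortedDownUp_add_two n_even, ih n_even, ← Nat.doubleFactorial_add_one,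
      Nat.add_succ_sub_one]

end Counting

theorem stmt_7 (N : ℕ) (hodd : Odd N) (hpos : 0 < N) :
    Nat.card {w : Equiv.Perm (Fin (N + 1)) //
        (∀ i j : Fin (N + 1), (j : ℕ) = (i : ℕ) + 1 →
            (Even (i : ℕ) → w j < w i) ∧ (Odd (i : ℕ) → w i < w j)) ∧
        (∀ i j : Fin (N + 1), (j : ℕ) = (i : ℕ) + 2 → Odd (i : ℕ) → w i < w j)}
      = Nat.doubleFactorial N :=
  card_isValleySortedDownUp hodd.add_one
end

section
/- For every Dyck word λ of semilength n, the LS generating polynomial satisfies P_λ · ∏_{c ∈ Chord(λ)} [l(c)] = [n]! in ℤ[q]; equivalently, the sum Σ_f q^{Σ_c f(c)} over all LS-labellings f of λ equals [n]!/∏_{c ∈ Chord(λ)} [l(c)]. In particular, ∏_{c ∈ Chord(λ)} [l(c)] divides [n]! in ℤ[q] and the quotient has nonnegative integer coefficients. -/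
/-!
Dyck words, chords, nesting, capacities and Lascoux–Schützenberger labellings.
A step is a `Bool`: `true` = U (up), `false` = D (down).
-/

open scoped BigOperators Classical

noncomputable section

/-- The height (#U − #D) of the prefix of length `k`. -/
def heightAt (l : List Bool) (k : ℕ) : ℤ :=
  ((l.take k).count true : ℤ) - ((l.take k).count false : ℤ)

/-- `l` is a Dyck word: equally many U's and D's, and every prefix has at least
as many U's as D's. -/
def IsDyckWord (l : List Bool) : Prop :=
  l.count true = l.count false ∧
    ∀ k, (l.take k).count false ≤ (l.take k).count true

/-- `(i,j)` is a chord of `l` (0-indexed matched pair of a U at `i` and a D at `j`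
under the standard parenthesis matching). -/
def IsChord (l : List Bool) (i j : ℕ) : Prop :=
  i < j ∧ j < l.length ∧ l.getD i false = true ∧ l.getD j true = false ∧
    heightAt l (j + 1) = heightAt l i ∧
    ∀ k ∈ Finset.Icc (i + 1) j, heightAt l i < heightAt l k

/-- The finset of chords of `l`. -/
def chords (l : List Bool) : Finset (ℕ × ℕ) :=
  (Finset.range l.length ×ˢ Finset.range l.length).filter fun p => IsChord l p.1 p.2

/-- `c' = (i',j')` is nested in `c = (i,j)` iff `i < i' < j' < j`. -/
def NestedIn (c' c : ℕ × ℕ) : Prop :=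
  c.1 < c'.1 ∧ c'.1 < c'.2 ∧ c'.2 < c.2

/-- The length `l(c)` of a chord: one plus the number of chords nested in it. -/
def chordLen (l : List Bool) (c : ℕ × ℕ) : ℕ :=
  1 + ((chords l).filter fun c' => NestedIn c' c).card

/-- The capacity of a chord: the number of D's strictly before its opening position. -/
def cap (l : List Bool) (c : ℕ × ℕ) : ℕ := (l.take c.1).count false

/-- LS-labellings of `l`: functions on chords (encoded as functions on `ℕ × ℕ`
vanishing off the chords) which weakly increase under nesting and are bounded by
the capacity on leaf chords. -/
def LSLabellings (l : List Bool) : Set ((ℕ × ℕ) → ℕ) :=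
  {f | (∀ c, c ∉ chords l → f c = 0) ∧
       (∀ c ∈ chords l, ∀ c' ∈ chords l, NestedIn c' c → f c ≤ f c') ∧
       (∀ c ∈ chords l, (∀ c' ∈ chords l, ¬ NestedIn c' c) → f c ≤ cap l c)}

/-- The quantum integer [n] = 1 + q + ⋯ + q^{n-1} in ℤ[q]. -/
def qintP (n : ℕ) : Polynomial ℤ := ∑ i ∈ Finset.range n, Polynomial.X ^ i

/-- The quantum factorial [n]! = [1][2]⋯[n] in ℤ[q]. -/
def qfactP (n : ℕ) : Polynomial ℤ := ∏ i ∈ Finset.range n, qintP (i + 1)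

/-- The LS generating polynomial P_λ = Σ_f q^{Σ_c f(c)} ∈ ℤ[q], summed over all
LS-labellings f of λ. -/
def PLS (l : List Bool) : Polynomial ℤ :=
  ∑ᶠ f ∈ LSLabellings l, Polynomial.X ^ (∑ c ∈ chords l, f c)

/-!
Call a factor of the word at positions `[x, y)` a Dyck segment if it is a Dyck word on its own.
A nonempty one splits as `U A D B`: the chord opened at `x` covers all chords of `A` and is
unrelated to those of `B`. Since the leftmost leaf below a chord has the same capacity as the chord,
the leaf bounds amount to `f c ≤ cap c` for every chord `c`. If the chord at `x` has label `k`,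
subtracting `k` from the labels in `A` leaves labellings of `A` with all capacities lowered by `k`.
So, with all capacities lowered by a constant and `m` the resulting capacity at `x`, the generating
polynomial times the product of the `[l(c)]` is `[m + 1] ⋯ [m + n]` by induction: the step is the
`q`-hockey-stick identity
`(∑ₖ q ^ (k (a + 1)) [m - k + 1] ⋯ [m - k + a]) [a + 1] = [m + 1] ⋯ [m + a + 1]`.
-/

open Finset Polynomial

/-! ### Rising `q`-factorials -/

/-- The rising `q`-factorial `[m + 1][m + 2] ⋯ [m + n]`, so that `[n]!` is the case `m = 0`. -/
def qascFact (m n : ℕ) : ℤ[X] := ∏ i ∈ range n, qintP (m + i + 1)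

theorem qascFact_zero_left (n : ℕ) : qascFact 0 n = qfactP n := by
  simp only [qascFact, qfactP, zero_add]

theorem qintP_add (a b : ℕ) : qintP (a + b) = qintP a + X ^ a * qintP b := by
  simp only [qintP, sum_range_add, mul_sum, pow_add]

theorem qascFact_add (m a b : ℕ) : qascFact m (a + b) = qascFact m a * qascFact (m + a) b := by
  simp only [qascFact, prod_range_add, add_assoc]

theorem qascFact_one (m : ℕ) : qascFact m 1 = qintP (m + 1) := by
  simp only [qascFact, prod_range_one, add_zero]

theorem sum_pow_mul_qascFact_mul_qintP (m a : ℕ) :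
    (∑ k ∈ range (m + 1), X ^ (k * (a + 1)) * qascFact (m - k) a) * qintP (a + 1) =
      qascFact m (a + 1) := by
  induction m with
  | zero => simp [qascFact, prod_range_succ]
  | succ m ih =>
    have split_last : qascFact (m + 1) (a + 1) =
        qascFact (m + 1) a * (qintP (a + 1) + X ^ (a + 1) * qintP (m + 1)) := by
      rw [qascFact_add, qascFact_one, ← qintP_add, show m + 1 + a + 1 = a + 1 + (m + 1) by ring]
    have split_first : qascFact m (a + 1) = qintP (m + 1) * qascFact (m + 1) a := by
      rw [add_comm a 1, qascFact_add, qascFact_one]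
    have shift : ∑ k ∈ range (m + 1), X ^ ((k + 1) * (a + 1)) * qascFact (m + 1 - (k + 1)) a =
        X ^ (a + 1) * ∑ k ∈ range (m + 1), X ^ (k * (a + 1)) * qascFact (m - k) a := by
      simp only [mul_sum, Nat.add_sub_add_right, add_one_mul _ (a + 1), pow_add]
      exact sum_congr rfl fun k _ => by ring
    rw [sum_range_succ', shift, add_mul, mul_assoc, ih, split_first, split_last]
    simp only [zero_mul, pow_zero, one_mul, Nat.sub_zero]
    ring

/-! ### Bounded labellings of a finite relation -/

section Labelling

variable {α : Type*} {r : α → α → Prop} {κ : α → ℕ} {S T : Finset α} {f g : α → ℕ} {top : α} {k : ℕ}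

/-- A labelling of `S` (extended by zero) bounded by `κ` that is weakly decreasing along `r`, where
`r c' c` reads as "`c'` lies below `c`". In contrast to `LSLabellings`, the bound is imposed on
every element of `S`, not only on the leaves. -/
structure IsLabelling (r : α → α → Prop) (κ : α → ℕ) (S : Finset α) (f : α → ℕ) : Prop where
  eq_zero : ∀ c ∉ S, f c = 0
  le_of_rel : ∀ c ∈ S, ∀ c' ∈ S, r c' c → f c ≤ f c'
  le_bound : ∀ c ∈ S, f c ≤ κ c

theorem finite_setOf_isLabelling (r : α → α → Prop) (κ : α → ℕ) (S : Finset α) :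
    {f | IsLabelling r κ S f}.Finite := by
  let bound : α →₀ ℕ := Finsupp.indicator S fun c _ => κ c
  refine ((finite_toSet (Iic bound)).image (⇑)).subset fun f hf => ?_
  refine ⟨Finsupp.onFinset S f fun c => not_imp_comm.1 (hf.eq_zero c), ?_, rfl⟩
  rw [mem_coe, mem_Iic, Finsupp.le_def]
  intro c
  by_cases hc : c ∈ S
  · simpa [bound, hc] using hf.le_bound c hc
  · simp [hf.eq_zero c hc]

/-- The finset of labellings of `S` bounded by `κ`. -/
def labellings (r : α → α → Prop) (κ : α → ℕ) (S : Finset α) : Finset (α → ℕ) :=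
  (finite_setOf_isLabelling r κ S).toFinset

theorem mem_labellings : f ∈ labellings r κ S ↔ IsLabelling r κ S f := by
  rw [labellings, Set.Finite.mem_toFinset, Set.mem_ofPred_eq]

/-- The generating polynomial of the labellings of `S` bounded by `κ`, by the sum of the labels. -/
def labelSum (r : α → α → Prop) (κ : α → ℕ) (S : Finset α) : ℤ[X] :=
  ∑ f ∈ labellings r κ S, X ^ ∑ c ∈ S, f c

theorem labelSum_empty (r : α → α → Prop) (κ : α → ℕ) : labelSum r κ ∅ = 1 := by
  have labellings_empty : labellings r κ ∅ = {0} := by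
    ext f
    rw [mem_labellings, mem_singleton]
    exact ⟨fun hf => funext fun c => hf.eq_zero c (notMem_empty c),
      by rintro rfl; constructor <;> simp⟩
  simp [labelSum, labellings_empty]

variable [DecidableEq α]

theorem IsLabelling.restrict (hf : IsLabelling r κ T f) (hST : S ⊆ T) :
    IsLabelling r κ S fun c => if c ∈ S then f c else 0 where
  eq_zero c hc := if_neg hc
  le_of_rel c hc c' hc' h := by
    simpa only [if_pos hc, if_pos hc'] using hf.le_of_rel c (hST hc) c' (hST hc') h
  le_bound c hc := by simpa only [if_pos hc] using hf.le_bound c (hST hc)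

theorem IsLabelling.add (hf : IsLabelling r κ S f) (hg : IsLabelling r κ T g)
    (hdisj : Disjoint S T) (hrel : ∀ s ∈ S, ∀ t ∈ T, ¬ r s t ∧ ¬ r t s) :
    IsLabelling r κ (S ∪ T) (f + g) := by
  have add_left : ∀ c ∈ S, (f + g) c = f c := fun c hc => by
    simp [hg.eq_zero c (disjoint_left.1 hdisj hc)]
  have add_right : ∀ c ∈ T, (f + g) c = g c := fun c hc => by
    simp [hf.eq_zero c (disjoint_right.1 hdisj hc)]
  refine ⟨fun c hc => ?_, fun c hc c' hc' h => ?_, fun c hc => ?_⟩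
  · rw [mem_union, not_or] at hc
    simp [hf.eq_zero c hc.1, hg.eq_zero c hc.2]
  · rcases mem_union.1 hc with hc | hc <;> rcases mem_union.1 hc' with hc' | hc'
    · simpa only [add_left _ hc, add_left _ hc'] using hf.le_of_rel c hc c' hc' h
    · exact absurd h (hrel c hc c' hc').2
    · exact absurd h (hrel c' hc' c hc).1
    · simpa only [add_right _ hc, add_right _ hc'] using hg.le_of_rel c hc c' hc' h
  · rcases mem_union.1 hc with hc | hc
    · simpa only [add_left _ hc] using hf.le_bound c hc
    · simpa only [add_right _ hc] using hg.le_bound c hc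

theorem labelSum_union (hdisj : Disjoint S T) (hrel : ∀ s ∈ S, ∀ t ∈ T, ¬ r s t ∧ ¬ r t s) :
    labelSum r κ (S ∪ T) = labelSum r κ S * labelSum r κ T := by
  rw [labelSum, labelSum, labelSum, sum_mul_sum, ← sum_product']
  simp only [← pow_add]
  refine (sum_nbij' (fun p => p.1 + p.2)
    (fun f => (fun c => if c ∈ S then f c else 0, fun c => if c ∈ T then f c else 0))
    ?_ ?_ ?_ ?_ ?_).symm <;> simp only [mem_product, mem_labellings, and_imp, Prod.forall]
  · exact fun f g hf hg => hf.add hg hdisj hrel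
  · exact fun f hf => ⟨hf.restrict subset_union_left, hf.restrict subset_union_right⟩
  · intro f g hf hg
    ext c
    · by_cases hc : c ∈ S
      · simp [hc, hg.eq_zero c (disjoint_left.1 hdisj hc)]
      · simp [hc, hf.eq_zero c hc]
    · by_cases hc : c ∈ T
      · simp [hc, hf.eq_zero c (disjoint_right.1 hdisj hc)]
      · simp [hc, hg.eq_zero c hc]
  · intro f hf
    ext c
    have : c ∈ S → c ∉ T := fun hc => disjoint_left.1 hdisj hc
    have := hf.eq_zero c
    rw [Pi.add_apply]
    grind
  · intro f g hf hg
    rw [sum_union hdisj]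
    congr 2 <;> refine sum_congr rfl fun c hc => ?_
    · simp [hg.eq_zero c (disjoint_left.1 hdisj hc)]
    · simp [hf.eq_zero c (disjoint_right.1 hdisj hc)]

theorem IsLabelling.sub_top (hf : IsLabelling r κ (insert top S) f) :
    IsLabelling r (fun c => κ c - f top) S fun c => if c ∈ S then f c - f top else 0 where
  eq_zero c hc := if_neg hc
  le_of_rel c hc c' hc' h := by
    simpa only [if_pos hc, if_pos hc'] using Nat.sub_le_sub_right
      (hf.le_of_rel c (mem_insert_of_mem hc) c' (mem_insert_of_mem hc') h) _
  le_bound c hc := by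
    simpa only [if_pos hc] using Nat.sub_le_sub_right (hf.le_bound c (mem_insert_of_mem hc)) _

theorem IsLabelling.add_const [Std.Asymm r] (hg : IsLabelling r (fun c => κ c - k) S g)
    (htop : ∀ c ∈ S, r c top) (hκ : ∀ c ∈ S, κ top ≤ κ c) (hk : k ≤ κ top) :
    IsLabelling r κ (insert top S) fun c => if c ∈ insert top S then g c + k else 0 := by
  have g_top : g top = 0 := hg.eq_zero top fun h => asymm (htop top h) (htop top h)
  refine ⟨fun c hc => if_neg hc, fun c hc c' hc' h => ?_, fun c hc => ?_⟩
  · rw [if_pos hc, if_pos hc', Nat.add_le_add_iff_right]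
    rcases mem_insert.1 hc with rfl | hcS
    · rw [g_top]
      exact Nat.zero_le _
    rcases mem_insert.1 hc' with rfl | hcS'
    · exact absurd h (asymm (htop c hcS))
    · exact hg.le_of_rel c hcS c' hcS' h
  · rw [if_pos hc]
    rcases mem_insert.1 hc with rfl | hcS
    · simpa [g_top] using hk
    · exact Nat.add_le_of_le_sub (hk.trans (hκ c hcS)) (hg.le_bound c hcS)

theorem sum_labellings_eq_top [Std.Asymm r] (htop : ∀ c ∈ S, r c top)
    (hκ : ∀ c ∈ S, κ top ≤ κ c) (hk : k ≤ κ top) :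
    ∑ f ∈ labellings r κ (insert top S) with f top = k, (X : ℤ[X]) ^ ∑ c ∈ insert top S, f c =
      X ^ (k * (#S + 1)) * labelSum r (fun c => κ c - k) S := by
  have top_notMem : top ∉ S := fun h => asymm (htop top h) (htop top h)
  rw [labelSum, mul_sum]
  simp only [← pow_add]
  refine (sum_nbij' (fun g c => if c ∈ insert top S then g c + k else 0)
    (fun f c => if c ∈ S then f c - k else 0) ?_ ?_ ?_ ?_ ?_).symm <;>
    simp only [mem_filter, mem_labellings, and_imp]
  · intro g hg
    exact ⟨hg.add_const htop hκ hk, by simp [hg.eq_zero top top_notMem]⟩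
  · rintro f hf rfl
    exact hf.sub_top
  · intro g hg
    ext c
    by_cases hc : c ∈ S
    · simp [hc]
    · simp [hc, hg.eq_zero c hc]
  · rintro f hf rfl
    ext c
    have := hf.eq_zero c
    have top_le : c ∈ S → f top ≤ f c := fun hc =>
      hf.le_of_rel top (mem_insert_self _ _) c (mem_insert_of_mem hc) (htop c hc)
    grind
  · intro g hg
    rw [sum_congr rfl fun c hc => if_pos hc, sum_add_distrib, sum_const,
      card_insert_of_notMem top_notMem, sum_insert top_notMem, hg.eq_zero top top_notMem,
      smul_eq_mul, zero_add, mul_comm k, add_comm]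

theorem labelSum_insert_top [Std.Asymm r] (htop : ∀ c ∈ S, r c top)
    (hκ : ∀ c ∈ S, κ top ≤ κ c) :
    labelSum r κ (insert top S) = ∑ k ∈ range (κ top + 1),
      X ^ (k * (#S + 1)) * labelSum r (fun c => κ c - k) S := by
  have top_label_mem : ∀ f ∈ labellings r κ (insert top S), f top ∈ range (κ top + 1) :=
    fun f hf => mem_range_succ_iff.2 ((mem_labellings.1 hf).le_bound top (mem_insert_self _ _))
  rw [labelSum, ← sum_fiberwise_of_maps_to top_label_mem]
  exact sum_congr rfl fun k hk => sum_labellings_eq_top htop hκ (mem_range_succ_iff.1 hk)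

end Labelling

/-! ### Dyck segments and their chords -/

section Segment

variable {l : List Bool} {i j k x y : ℕ}

theorem heightAt_succ (hk : k < l.length) :
    heightAt l (k + 1) = heightAt l k + if l[k] then 1 else -1 := by
  simp only [heightAt, List.take_add_one, List.getElem?_eq_getElem hk, List.count_append]
  cases l[k] <;> grind

/-- The number of D's among the first `k` letters, i.e. the capacity of a chord opening at `k`. -/
def downsBefore (l : List Bool) (k : ℕ) : ℕ := (l.take k).count false

theorem downsBefore_succ (hk : k < l.length) :
    downsBefore l (k + 1) = downsBefore l k + if l[k] then 0 else 1 := by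
  simp only [downsBefore, List.take_add_one, List.getElem?_eq_getElem hk, List.count_append]
  cases l[k] <;> simp

theorem downsBefore_mono (l : List Bool) : Monotone (downsBefore l) := fun _ _ h =>
  (List.take_sublist_take_left h).count_le false

namespace IsChord

theorem getElem_left (h : IsChord l i j) : l[i]'(h.1.trans h.2.1) = true := by
  rw [← List.getD_eq_getElem l false]
  exact h.2.2.1

theorem getElem_right (h : IsChord l i j) : l[j]'h.2.1 = false := by
  rw [← List.getD_eq_getElem l true]
  exact h.2.2.2.1

theorem heightAt_left_succ (h : IsChord l i j) : heightAt l (i + 1) = heightAt l i + 1 := by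
  rw [heightAt_succ (h.1.trans h.2.1), h.getElem_left, if_pos rfl]

theorem heightAt_right_succ (h : IsChord l i j) : heightAt l (j + 1) = heightAt l i :=
  h.2.2.2.2.1

theorem heightAt_right (h : IsChord l i j) : heightAt l j = heightAt l i + 1 := by
  have step := heightAt_succ h.2.1
  rw [h.getElem_right, h.heightAt_right_succ, if_neg Bool.false_ne_true] at step
  omega

theorem heightAt_lt (h : IsChord l i j) (hik : i < k) (hkj : k ≤ j) :
    heightAt l i < heightAt l k :=
  h.2.2.2.2.2 k (mem_Icc.2 ⟨hik, hkj⟩)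

theorem downsBefore_left_succ (h : IsChord l i j) :
    downsBefore l (i + 1) = downsBefore l i := by
  rw [downsBefore_succ (h.1.trans h.2.1), h.getElem_left, if_pos rfl, add_zero]

theorem downsBefore_right_succ (h : IsChord l i j) :
    downsBefore l (j + 1) = downsBefore l j + 1 := by
  simp [downsBefore_succ h.2.1, h.getElem_right]

theorem right_unique (h : IsChord l i j) (h' : IsChord l i k) : j = k := by
  rcases lt_trichotomy j k with hjk | hjk | hjk
  · exact absurd h.heightAt_right_succ (h'.heightAt_lt (by have := h.1; omega) hjk).ne'
  · exact hjk
  · exact absurd h'.heightAt_right_succ (h.heightAt_lt (by have := h'.1; omega) hjk).ne'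

theorem right_lt_of_left_mem (h : IsChord l i j) (h' : IsChord l x y) (hix : i < x) (hxj : x < j) :
    y < j := by
  have lt_left := h.heightAt_lt hix hxj.le
  by_contra! hjy
  rcases hjy.eq_or_lt with rfl | hjy
  · have := h.heightAt_right_succ.symm.trans h'.heightAt_right_succ
    omega
  · have := h'.heightAt_lt (k := j + 1) (by omega) hjy
    have := h.heightAt_right_succ
    omega

theorem left_ne_right (h : IsChord l i j) (h' : IsChord l x y) : x ≠ j := by
  rintro rfl
  exact Bool.false_ne_true (h.getElem_right.symm.trans h'.getElem_left)

end IsChord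

theorem mem_chords {c : ℕ × ℕ} : c ∈ chords l ↔ IsChord l c.1 c.2 := by
  simp only [chords, mem_filter, mem_product, mem_range, and_iff_right_iff_imp]
  exact fun h => ⟨h.1.trans h.2.1, h.2.1⟩

/-- The factor of `l` at positions `x, …, y - 1` is a Dyck word. -/
structure IsDyckSegment (l : List Bool) (x y : ℕ) : Prop where
  le : x ≤ y
  le_length : y ≤ l.length
  heightAt_eq : heightAt l y = heightAt l x
  le_heightAt : ∀ k, x ≤ k → k ≤ y → heightAt l x ≤ heightAt l k

theorem IsDyckWord.isDyckSegment (hl : IsDyckWord l) : IsDyckSegment l 0 l.length where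
  le := Nat.zero_le _
  le_length := le_rfl
  heightAt_eq := by simp [heightAt, hl.1]
  le_heightAt k _ _ := by simpa [heightAt] using hl.2 k

theorem IsChord.isDyckSegment_inside (h : IsChord l i j) : IsDyckSegment l (i + 1) j where
  le := h.1
  le_length := h.2.1.le
  heightAt_eq := by rw [h.heightAt_right, h.heightAt_left_succ]
  le_heightAt k hik hkj := by
    rw [h.heightAt_left_succ]
    exact h.heightAt_lt hik hkj

theorem IsDyckSegment.outside (hs : IsDyckSegment l x y) (h : IsChord l x j) (hjy : j < y) :
    IsDyckSegment l (j + 1) y where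
  le := hjy
  le_length := hs.le_length
  heightAt_eq := by rw [hs.heightAt_eq, h.heightAt_right_succ]
  le_heightAt k hjk hky := by
    rw [h.heightAt_right_succ]
    exact hs.le_heightAt k (by have := h.1; omega) hky

theorem IsDyckSegment.exists_first_return (hs : IsDyckSegment l x y) (hxy : x < y) :
    ∃ j, x ≤ j ∧ j < y ∧ heightAt l (j + 1) = heightAt l x ∧
      ∀ k, x < k → k ≤ j → heightAt l x < heightAt l k := by
  obtain ⟨y, rfl⟩ := Nat.exists_eq_succ_of_ne_zero (Nat.ne_zero_of_lt hxy)
  have returns : ∃ j, x ≤ j ∧ heightAt l (j + 1) = heightAt l x :=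
    ⟨y, Nat.le_of_lt_succ hxy, hs.heightAt_eq⟩
  obtain ⟨j, ⟨hxj, hj⟩, hmin⟩ := Nat.findX returns
  have hjy : j ≤ y := not_lt.1 fun hyj => hmin y hyj ⟨Nat.le_of_lt_succ hxy, hs.heightAt_eq⟩
  refine ⟨j, hxj, Nat.lt_succ_of_le hjy, hj, fun k hxk hkj => ?_⟩
  refine (hs.le_heightAt k hxk.le (by omega)).lt_of_ne' fun heq => ?_
  exact hmin (k - 1) (by omega) ⟨by omega, by rwa [Nat.sub_add_cancel (by omega)]⟩

theorem IsDyckSegment.exists_isChord (hs : IsDyckSegment l x y) (hxy : x < y) :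
    ∃ j < y, IsChord l x j := by
  obtain ⟨j, hxj, hjy, hj, lt_height⟩ := hs.exists_first_return hxy
  have hjl : j < l.length := hjy.trans_le hs.le_length
  have step_x := heightAt_succ (hxj.trans_lt hjl)
  have step_j := heightAt_succ hjl
  have hxj' : x < j := by
    refine hxj.lt_of_ne ?_
    rintro rfl
    split_ifs at step_x <;> omega
  refine ⟨j, hjy, hxj', hjl, ?_, ?_, hj, fun k hk => ?_⟩
  · rw [List.getD_eq_getElem _ _ (hxj.trans_lt hjl)]
    by_contra hD
    rw [if_neg hD] at step_x
    have := lt_height (x + 1) (by omega) hxj'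
    omega
  · rw [List.getD_eq_getElem _ _ hjl, ← Bool.not_eq_true]
    intro hU
    rw [if_pos hU] at step_j
    have := lt_height j hxj' le_rfl
    omega
  · rw [mem_Icc] at hk
    exact lt_height k hk.1 hk.2

theorem IsDyckSegment.induction {motive : ∀ x y, IsDyckSegment l x y → Prop}
    (empty : ∀ x hs, motive x x hs)
    (cons : ∀ x j y hs (h : IsChord l x j) (hjy : j < y),
      motive (x + 1) j h.isDyckSegment_inside → motive (j + 1) y (hs.outside h hjy) →
        motive x y hs)
    (hs : IsDyckSegment l x y) : motive x y hs := by
  induction hd : y - x using Nat.strong_induction_on generalizing x y with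
  | _ d ih =>
    rcases hs.le.eq_or_lt with rfl | hxy
    · exact empty x hs
    obtain ⟨j, hjy, hj⟩ := hs.exists_isChord hxy
    have hxj := hj.1
    exact cons x j y hs hj hjy
      (ih _ (by omega) hj.isDyckSegment_inside rfl) (ih _ (by omega) (hs.outside hj hjy) rfl)

/-- The chords of `l` both of whose ends lie in `[x, y)`. -/
def chordsIn (l : List Bool) (x y : ℕ) : Finset (ℕ × ℕ) := {c ∈ chords l | x ≤ c.1 ∧ c.2 < y}

theorem mem_chordsIn {c : ℕ × ℕ} :
    c ∈ chordsIn l x y ↔ IsChord l c.1 c.2 ∧ x ≤ c.1 ∧ c.2 < y := by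
  rw [chordsIn, mem_filter, mem_chords]

theorem chordsIn_self (l : List Bool) (x : ℕ) : chordsIn l x x = ∅ := by
  ext c
  simp only [mem_chordsIn, notMem_empty, iff_false]
  rintro ⟨h, hx, hy⟩
  have := h.1
  omega

theorem chordsIn_zero_length (l : List Bool) : chordsIn l 0 l.length = chords l := by
  ext c
  simp only [mem_chordsIn, mem_chords, Nat.zero_le, true_and, and_iff_left_iff_imp]
  exact fun h => h.2.1

theorem IsChord.chordsIn_eq (h : IsChord l x j) (hjy : j < y) :
    chordsIn l x y = insert (x, j) (chordsIn l (x + 1) j) ∪ chordsIn l (j + 1) y := by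
  ext ⟨a, b⟩
  simp only [mem_union, mem_insert, mem_chordsIn, Prod.mk.injEq]
  have hxj := h.1
  constructor
  · rintro ⟨hab, hxa, hby⟩
    rcases hxa.eq_or_lt with rfl | hxa
    · exact .inl (.inl ⟨rfl, hab.right_unique h⟩)
    rcases lt_or_ge a j with haj | hja
    · exact .inl (.inr ⟨hab, hxa, h.right_lt_of_left_mem hab hxa haj⟩)
    · exact .inr ⟨hab, hja.lt_of_ne' (h.left_ne_right hab), hby⟩
  · rintro ((⟨rfl, rfl⟩ | ⟨hab, hxa, hbj⟩) | ⟨hab, hja, hby⟩)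
    · exact ⟨h, le_rfl, hjy⟩
    · exact ⟨hab, by omega, by omega⟩
    · exact ⟨hab, by omega, hby⟩

theorem mk_notMem_chordsIn_succ (l : List Bool) (x j y : ℕ) : (x, j) ∉ chordsIn l (x + 1) y := by
  simp [mem_chordsIn]

theorem IsChord.disjoint_chordsIn (h : IsChord l x j) (y : ℕ) :
    Disjoint (insert (x, j) (chordsIn l (x + 1) j)) (chordsIn l (j + 1) y) := by
  rw [disjoint_left]
  rintro ⟨a, b⟩ hA hB
  simp only [mem_insert, mem_chordsIn, Prod.mk.injEq] at hA hB
  have := h.1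
  have := hB.1.1
  omega

theorem IsChord.not_nestedIn (h : IsChord l x j) {c d : ℕ × ℕ}
    (hc : c ∈ insert (x, j) (chordsIn l (x + 1) j)) (hd : d ∈ chordsIn l (j + 1) y) :
    ¬ NestedIn c d ∧ ¬ NestedIn d c := by
  obtain ⟨a, b⟩ := c
  simp only [mem_insert, mem_chordsIn, Prod.mk.injEq] at hc hd
  have := h.1
  have := hd.1.1
  simp only [NestedIn]
  omega

theorem chordLen_eq (l : List Bool) (i j : ℕ) :
    chordLen l (i, j) = #(chordsIn l (i + 1) j) + 1 := by
  rw [chordLen, add_comm, chordsIn]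
  congr 2
  refine filter_congr fun c hc => ?_
  have := (mem_chords.1 hc).1
  simp only [NestedIn]
  omega

theorem IsChord.card_chordsIn_eq (h : IsChord l x j) (hjy : j < y) :
    #(chordsIn l x y) = #(chordsIn l (x + 1) j) + 1 + #(chordsIn l (j + 1) y) := by
  rw [h.chordsIn_eq hjy, card_union_of_disjoint (h.disjoint_chordsIn y),
    card_insert_of_notMem (mk_notMem_chordsIn_succ l x j j)]

theorem IsDyckSegment.downsBefore_add_card (hs : IsDyckSegment l x y) :
    downsBefore l x + #(chordsIn l x y) = downsBefore l y := by
  induction hs using IsDyckSegment.induction with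
  | empty x _ => simp [chordsIn_self]
  | cons x j y _ h hjy ihA ihB =>
    rw [h.card_chordsIn_eq hjy]
    rw [h.downsBefore_left_succ] at ihA
    rw [h.downsBefore_right_succ] at ihB
    omega

end Segment

/-! ### The hook formula -/

section HookFormula

variable {l : List Bool} {x j y k : ℕ}

instance : Std.Asymm NestedIn where
  asymm _ _ h h' := by
    simp only [NestedIn] at h h'
    omega

theorem IsChord.labelSum_chordsIn_eq (h : IsChord l x j) (hjy : j < y) (k : ℕ) :
    labelSum NestedIn (fun c => cap l c - k) (chordsIn l x y) =
      (∑ i ∈ range (downsBefore l x - k + 1), X ^ (i * (#(chordsIn l (x + 1) j) + 1)) *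
        labelSum NestedIn (fun c => cap l c - (k + i)) (chordsIn l (x + 1) j)) *
      labelSum NestedIn (fun c => cap l c - k) (chordsIn l (j + 1) y) := by
  have nested : ∀ c ∈ chordsIn l (x + 1) j, NestedIn c (x, j) := fun c hc => by
    obtain ⟨hcc, hxc, hcj⟩ := mem_chordsIn.1 hc
    exact ⟨hxc, hcc.1, hcj⟩
  have cap_root_le : ∀ c ∈ chordsIn l (x + 1) j, cap l (x, j) - k ≤ cap l c - k := fun c hc =>
    Nat.sub_le_sub_right (downsBefore_mono l (nested c hc).1.le) k
  rw [h.chordsIn_eq hjy, labelSum_union (h.disjoint_chordsIn y)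
    fun c hc d hd => h.not_nestedIn hc hd, labelSum_insert_top nested cap_root_le]
  simp only [Nat.sub_sub]
  rfl

theorem IsChord.prod_chordLen_chordsIn_eq (h : IsChord l x j) (hjy : j < y) :
    ∏ c ∈ chordsIn l x y, qintP (chordLen l c) =
      qintP (#(chordsIn l (x + 1) j) + 1) *
        (∏ c ∈ chordsIn l (x + 1) j, qintP (chordLen l c)) *
        ∏ c ∈ chordsIn l (j + 1) y, qintP (chordLen l c) := by
  rw [h.chordsIn_eq hjy, prod_union (h.disjoint_chordsIn y),
    prod_insert (mk_notMem_chordsIn_succ l x j j), chordLen_eq]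

theorem IsDyckSegment.labelSum_mul_prod_chordLen (hs : IsDyckSegment l x y)
    (hk : k ≤ downsBefore l x) :
    labelSum NestedIn (fun c => cap l c - k) (chordsIn l x y) *
        ∏ c ∈ chordsIn l x y, qintP (chordLen l c) =
      qascFact (downsBefore l x - k) #(chordsIn l x y) := by
  induction hs using IsDyckSegment.induction generalizing k with
  | empty x _ => simp [chordsIn_self, labelSum_empty, qascFact]
  | cons x j y _ h hjy ihA ihB =>
    rw [h.downsBefore_left_succ] at ihA
    have downs_eq : downsBefore l (j + 1) - k =
        downsBefore l x - k + (#(chordsIn l (x + 1) j) + 1) := by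
      have := h.isDyckSegment_inside.downsBefore_add_card
      rw [h.downsBefore_left_succ] at this
      rw [h.downsBefore_right_succ]
      omega
    have hkB : k ≤ downsBefore l (j + 1) := hk.trans (downsBefore_mono l (by have := h.1; omega))
    rw [h.card_chordsIn_eq hjy, qascFact_add, ← sum_pow_mul_qascFact_mul_qintP, ← downs_eq,
      ← ihB hkB, h.labelSum_chordsIn_eq hjy, h.prod_chordLen_chordsIn_eq hjy]
    have inside : ∀ i ∈ range (downsBefore l x - k + 1),
        qascFact (downsBefore l x - k - i) #(chordsIn l (x + 1) j) =
          labelSum NestedIn (fun c => cap l c - (k + i)) (chordsIn l (x + 1) j) *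
            ∏ c ∈ chordsIn l (x + 1) j, qintP (chordLen l c) := fun i hi => by
      rw [mem_range] at hi
      rw [Nat.sub_sub, ihA (by omega)]
    rw [sum_congr rfl fun i hi => congrArg _ (inside i hi)]
    simp only [← mul_assoc, ← sum_mul]
    ring

theorem le_cap_of_mem_LSLabellings {f : ℕ × ℕ → ℕ} (hf : f ∈ LSLabellings l) {i j : ℕ}
    (h : IsChord l i j) : f (i, j) ≤ cap l (i, j) := by
  induction hd : j - i using Nat.strong_induction_on generalizing i j with
  | _ d ih =>
    have hc : (i, j) ∈ chords l := mem_chords.2 h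
    by_cases leaf : ∀ c' ∈ chords l, ¬ NestedIn c' (i, j)
    · exact hf.2.2 _ hc leaf
    push Not at leaf
    obtain ⟨c', -, h₁, h₂, h₃⟩ := leaf
    -- The chord opened at `i + 1` is nested in `(i, j)` and has the same capacity.
    obtain ⟨j', hj', h'⟩ := h.isDyckSegment_inside.exists_isChord (by simp only at h₁ h₃; omega)
    have := h'.1
    calc f (i, j) ≤ f (i + 1, j') :=
          hf.2.1 _ hc _ (mem_chords.2 h') ⟨Nat.lt_succ_self i, h'.1, hj'⟩
      _ ≤ cap l (i + 1, j') := ih _ (by omega) h' rfl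
      _ = cap l (i, j) := h.downsBefore_left_succ

theorem mem_LSLabellings_iff {f : ℕ × ℕ → ℕ} :
    f ∈ LSLabellings l ↔ IsLabelling NestedIn (cap l) (chords l) f :=
  ⟨fun hf => ⟨hf.1, hf.2.1, fun _ hc => le_cap_of_mem_LSLabellings hf (mem_chords.1 hc)⟩,
    fun hf => ⟨hf.eq_zero, hf.le_of_rel, fun c hc _ => hf.le_bound c hc⟩⟩

theorem PLS_eq_labelSum (l : List Bool) : PLS l = labelSum NestedIn (cap l) (chords l) := by
  have coe_labellings : LSLabellings l = labellings NestedIn (cap l) (chords l) := by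
    ext f
    rw [mem_LSLabellings_iff, mem_coe, mem_labellings]
  rw [PLS, coe_labellings, finsum_mem_coe_finset, labelSum]

theorem IsDyckWord.card_chords (hl : IsDyckWord l) : 2 * #(chords l) = l.length := by
  have card_eq := hl.isDyckSegment.downsBefore_add_card
  simp only [chordsIn_zero_length, downsBefore, List.take_zero, List.count_nil, zero_add,
    List.take_length] at card_eq
  have := List.count_true_add_count_false l
  have := hl.1
  omega

theorem IsDyckWord.PLS_mul_prod_chordLen (hl : IsDyckWord l) :
    PLS l * ∏ c ∈ chords l, qintP (chordLen l c) = qfactP #(chords l) := by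
  have hook := hl.isDyckSegment.labelSum_mul_prod_chordLen (Nat.zero_le _)
  simpa [chordsIn_zero_length, ← PLS_eq_labelSum, downsBefore, qascFact_zero_left] using hook

end HookFormula

theorem stmt_8 (n : ℕ) (l : List Bool) (hd : IsDyckWord l) (hlen : l.length = 2 * n) :
    PLS l * (∏ c ∈ chords l, qintP (chordLen l c)) = qfactP n ∧
      (∏ c ∈ chords l, qintP (chordLen l c)) ∣ qfactP n := by
  have hcard : #(chords l) = n := by
    have := hd.card_chords
    omega
  have hook := hd.PLS_mul_prod_chordLen
  rw [hcard] at hook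
  exact ⟨hook, Dvd.intro_left _ hook⟩
end
end

section
/- Let λ be a Dyck word of semilength n. Then the LS generating polynomial of the Dyck word UλD (of semilength n+1) equals that of λ: P_{UλD} = P_λ in ℤ[q]. -/
/-!
Dyck words, chords, nesting, capacities and Lascoux–Schützenberger labellings.
A step is a `Bool`: `true` = U (up), `false` = D (down).
-/

open scoped BigOperators Classical

noncomputable section

/-!
The chords of `UλD` are the chords of `λ`, shifted by one position, together with one outer chord
containing all of them. The first peak `UD` of `UλD` is a leaf chord of capacity `0` which is
either the outer chord or nested in it, so every LS-labelling vanishes on the outer chord, and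
restriction to the shifted chords is a weight-preserving bijection onto the LS-labellings of `λ`.
-/

theorem bijOn_comp_of_injective {α β M : Type*} [Zero M] {e : α → β} (he : Function.Injective e)
    (s : Set (α → M)) :
    Set.BijOn (· ∘ e) {f : β → M | Function.support f ⊆ Set.range e ∧ f ∘ e ∈ s} s := by
  refine ⟨fun f hf => hf.2, fun f hf g hg hfg => ?_, fun g hg => ?_⟩
  · funext b
    by_cases hb : b ∈ Set.range e
    · obtain ⟨a, rfl⟩ := hb
      exact congrFun hfg a
    · rw [Function.notMem_support.1 (mt (@hf.1 b) hb), Function.notMem_support.1 (mt (@hg.1 b) hb)]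
  · have restrict : Function.extend e g 0 ∘ e = g := Function.extend_comp he g 0
    refine ⟨Function.extend e g 0, ⟨fun b hb => ?_, restrict.symm ▸ hg⟩, restrict⟩
    by_contra hrange
    exact hb (Function.extend_apply' g (0 : β → M) b hrange)

/-- The word `UλD` obtained from `λ`; it is again a Dyck word if `λ` is one. -/
def elevate (l : List Bool) : List Bool := true :: (l ++ [false])

/-- Shifts a chord by one position, as prepending a letter to the word does. -/
def shiftChord : ℕ × ℕ ↪ ℕ × ℕ := (addRightEmbedding 1).prodMap (addRightEmbedding 1)

theorem shiftChord_mk (i j : ℕ) : shiftChord (i, j) = (i + 1, j + 1) := rfl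

theorem shiftChord_ne_zero_left (c : ℕ × ℕ) (j : ℕ) : shiftChord c ≠ (0, j) :=
  fun h => Nat.succ_ne_zero c.1 (congrArg Prod.fst h)

theorem heightAt_zero (l : List Bool) : heightAt l 0 = 0 := by simp [heightAt]

theorem heightAt_cons_succ (a : Bool) (l : List Bool) (k : ℕ) :
    heightAt (a :: l) (k + 1) = (bif a then 1 else -1) + heightAt l k := by
  cases a <;> simp [heightAt] <;> ring

theorem heightAt_append_of_le_length {l : List Bool} {k : ℕ} (hk : k ≤ l.length)
    (r : List Bool) : heightAt (l ++ r) k = heightAt l k := by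
  simp only [heightAt, List.take_append_of_le_length hk]

theorem heightAt_append_length_add (l r : List Bool) (k : ℕ) :
    heightAt (l ++ r) (l.length + k) = heightAt l l.length + heightAt r k := by
  simp only [heightAt, List.take_length_add_append, List.take_length, List.count_append]
  push_cast
  ring

theorem IsDyckWord.heightAt_nonneg {l : List Bool} (hl : IsDyckWord l) (k : ℕ) :
    0 ≤ heightAt l k :=
  sub_nonneg.2 (Int.ofNat_le.2 (hl.2 k))

theorem IsDyckWord.heightAt_length {l : List Bool} (hl : IsDyckWord l) :
    heightAt l l.length = 0 := by
  simp [heightAt, hl.1]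

theorem mem_chords_iff {l : List Bool} {i j : ℕ} : (i, j) ∈ chords l ↔ IsChord l i j := by
  simp only [chords, Finset.mem_filter, Finset.mem_product, Finset.mem_range, and_iff_right_iff_imp]
  exact fun h => ⟨h.1.trans h.2.1, h.2.1⟩

theorem isChord_cons_succ_iff (a : Bool) (l : List Bool) (i j : ℕ) :
    IsChord (a :: l) (i + 1) (j + 1) ↔ IsChord l i j := by
  simp only [IsChord, heightAt_cons_succ, ← Finset.map_add_right_Icc, Finset.forall_mem_map,
    addRightEmbedding_apply, List.getD_cons_succ, List.length_cons, add_lt_add_iff_left,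
    add_lt_add_iff_right, add_right_inj]

theorem isChord_append_iff {l : List Bool} {j : ℕ} (hj : j < l.length) (r : List Bool) (i : ℕ) :
    IsChord (l ++ r) i j ↔ IsChord l i j := by
  refine and_congr_right fun hij => ?_
  have heights : (∀ k ∈ Finset.Icc (i + 1) j, heightAt l i < heightAt (l ++ r) k) ↔
      ∀ k ∈ Finset.Icc (i + 1) j, heightAt l i < heightAt l k :=
    forall₂_congr fun k hk => by
      rw [heightAt_append_of_le_length ((Finset.mem_Icc.1 hk).2.trans hj.le)]
  rw [List.getD_append _ _ _ _ (hij.trans hj), List.getD_append _ _ _ _ hj,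
    heightAt_append_of_le_length hj, heightAt_append_of_le_length (hij.trans hj).le, heights]
  simp [hj, Nat.lt_add_right]

theorem isChord_peak (l r : List Bool) :
    IsChord (l ++ true :: false :: r) l.length (l.length + 1) := by
  have start := heightAt_append_length_add l (true :: false :: r) 0
  have top := heightAt_append_length_add l (true :: false :: r) 1
  have finish := heightAt_append_length_add l (true :: false :: r) 2
  simp only [add_zero] at start
  refine ⟨by simp, by simp, by simp, by simp, ?_, ?_⟩
  · rw [start, finish]
    simp [heightAt]
  · intro k hk
    obtain rfl : k = l.length + 1 := by simpa using hk
    rw [start, top]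
    simp [heightAt]

theorem cap_append_length (l r : List Bool) (j : ℕ) :
    cap (l ++ r) (l.length, j) = l.count false := by
  simp [cap]

theorem exists_cons_true_eq_replicate_append {l : List Bool} (hl : false ∈ l) :
    ∃ m r, true :: l = List.replicate m true ++ true :: false :: r := by
  induction l with
  | nil => simp at hl
  | cons a l ih =>
    cases a with
    | false => exact ⟨0, l, rfl⟩
    | true =>
      obtain ⟨m, r, h⟩ := ih (by simpa using hl)
      exact ⟨m + 1, r, by rw [h, List.replicate_succ, List.cons_append]⟩

theorem exists_isChord_succ_cap_eq_zero {l : List Bool} (hl : false ∈ l) :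
    ∃ m, IsChord (true :: l) m (m + 1) ∧ cap (true :: l) (m, m + 1) = 0 := by
  obtain ⟨m, r, h⟩ := exists_cons_true_eq_replicate_append hl
  have peak := isChord_peak (List.replicate m true) r
  have capacity := cap_append_length (List.replicate m true) (true :: false :: r) (m + 1)
  rw [List.length_replicate] at peak capacity
  exact ⟨m, h ▸ peak, by rw [h, capacity]; simp [List.count_replicate]⟩

theorem not_nestedIn_succ (c : ℕ × ℕ) (i : ℕ) : ¬ NestedIn c (i, i + 1) := by
  simp only [NestedIn]
  omega

theorem not_nestedIn_zero (c : ℕ × ℕ) (j : ℕ) : ¬ NestedIn (0, j) c := by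
  simp [NestedIn]

theorem nestedIn_shiftChord_iff (c c' : ℕ × ℕ) :
    NestedIn (shiftChord c') (shiftChord c) ↔ NestedIn c' c := by
  simp [NestedIn, shiftChord]

theorem nestedIn_shiftChord_outer {l : List Bool} {c : ℕ × ℕ} (hc : c ∈ chords l) :
    NestedIn (shiftChord c) (0, l.length + 1) := by
  have chord := mem_chords_iff.1 hc
  exact ⟨Nat.succ_pos _, Nat.succ_lt_succ chord.1, Nat.succ_lt_succ chord.2.1⟩

theorem cap_elevate_shiftChord {l : List Bool} {c : ℕ × ℕ} (hc : c ∈ chords l) :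
    cap (elevate l) (shiftChord c) = cap l c := by
  have chord := mem_chords_iff.1 hc
  have hle : c.1 ≤ l.length := (chord.1.trans chord.2.1).le
  simp [cap, elevate, shiftChord, List.take_append_of_le_length hle]

namespace IsDyckWord

variable {l : List Bool}

theorem isChord_append_false_iff (hl : IsDyckWord l) (i j : ℕ) :
    IsChord (l ++ [false]) i j ↔ IsChord l i j := by
  refine ⟨fun h => ?_, fun h => (isChord_append_iff h.2.1 _ i).2 h⟩
  suffices hj : j < l.length from (isChord_append_iff hj _ i).1 h
  obtain ⟨hij, hlen, -, -, hclose, -⟩ := h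
  by_contra hj
  obtain rfl : j = l.length := by
    rw [List.length_append, List.length_singleton] at hlen
    omega
  rw [heightAt_append_length_add, heightAt_append_of_le_length hij.le,
    hl.heightAt_length] at hclose
  have hi := hl.heightAt_nonneg i
  simp [heightAt_zero, heightAt_cons_succ, ← hclose] at hi

theorem isChord_elevate_zero_iff (hl : IsDyckWord l) (j : ℕ) :
    IsChord (elevate l) 0 j ↔ j = l.length + 1 := by
  have height_pos {k : ℕ} (hk : k ≤ l.length) : 0 < heightAt (elevate l) (k + 1) := by
    rw [elevate, heightAt_cons_succ, heightAt_append_of_le_length hk]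
    exact add_pos_of_pos_of_nonneg one_pos (hl.heightAt_nonneg k)
  constructor
  · rintro ⟨-, hlen, -, -, hclose, -⟩
    rw [heightAt_zero] at hclose
    by_contra hj
    refine (height_pos (k := j) ?_).ne' hclose
    simp only [elevate, List.length_cons, List.length_append, List.length_nil] at hlen
    omega
  · rintro rfl
    refine ⟨by simp, by simp [elevate], by simp [elevate], by simp [elevate], ?_, ?_⟩
    · simp [elevate, heightAt_cons_succ, heightAt_append_length_add, hl.heightAt_length,
        heightAt_zero]
    · intro k hk
      obtain ⟨k, rfl⟩ := Nat.exists_eq_add_of_le' (Finset.mem_Icc.1 hk).1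
      rw [heightAt_zero]
      exact height_pos (by simpa using hk)

theorem chords_elevate (hl : IsDyckWord l) :
    chords (elevate l) = insert (0, l.length + 1) ((chords l).map shiftChord) := by
  ext ⟨i, j⟩
  rw [mem_chords_iff, Finset.mem_insert, Finset.mem_map]
  rcases i with _ | i
  · simp [hl.isChord_elevate_zero_iff, shiftChord_ne_zero_left]
  rcases j with _ | j
  · simp [IsChord, shiftChord_mk]
  · rw [elevate, isChord_cons_succ_iff, hl.isChord_append_false_iff]
    simp [shiftChord_mk, mem_chords_iff]

theorem labelling_outer_eq_zero (hl : IsDyckWord l) {f : ℕ × ℕ → ℕ}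
    (hf : f ∈ LSLabellings (elevate l)) :
    f (0, l.length + 1) = 0 := by
  obtain ⟨-, mono, bound⟩ := hf
  obtain ⟨m, peak, capacity⟩ :=
    exists_isChord_succ_cap_eq_zero (l := l ++ [false]) (by simp)
  have peak_mem : (m, m + 1) ∈ chords (elevate l) := mem_chords_iff.2 peak
  have peak_zero : f (m, m + 1) = 0 :=
    Nat.eq_zero_of_le_zero (capacity ▸ bound _ peak_mem fun c _ => not_nestedIn_succ c m)
  rw [hl.chords_elevate] at mono peak_mem
  rcases Finset.mem_insert.1 peak_mem with outer | shifted
  · rw [← outer, peak_zero]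
  · obtain ⟨c, hc, hcm⟩ := Finset.mem_map.1 shifted
    have nested : NestedIn (m, m + 1) (0, l.length + 1) := hcm ▸ nestedIn_shiftChord_outer hc
    have := mono _ (Finset.mem_insert_self _ _) _ peak_mem nested
    omega

theorem forall_mem_chords_elevate_iff (hl : IsDyckWord l) {p : ℕ × ℕ → Prop} :
    (∀ c ∈ chords (elevate l), p c) ↔
      p (0, l.length + 1) ∧ ∀ c ∈ chords l, p (shiftChord c) := by
  simp only [hl.chords_elevate, Finset.forall_mem_insert, Finset.forall_mem_map]

theorem shiftChord_mem_chords_elevate_iff (hl : IsDyckWord l) (c : ℕ × ℕ) :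
    shiftChord c ∈ chords (elevate l) ↔ c ∈ chords l := by
  rw [hl.chords_elevate, Finset.mem_insert, Finset.mem_map' shiftChord]
  exact or_iff_right (shiftChord_ne_zero_left c _)

theorem vanishes_off_chords_elevate_iff (hl : IsDyckWord l) {f : ℕ × ℕ → ℕ}
    (outer : f (0, l.length + 1) = 0) :
    (∀ c ∉ chords (elevate l), f c = 0) ↔
      Function.support f ⊆ Set.range shiftChord ∧ ∀ c ∉ chords l, f (shiftChord c) = 0 := by
  constructor
  · intro vanish
    refine ⟨fun c hc => ?_, fun c hc =>
      vanish _ (mt (hl.shiftChord_mem_chords_elevate_iff c).1 hc)⟩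
    have hmem : c ∈ chords (elevate l) := not_imp_comm.1 (vanish c) hc
    rw [hl.chords_elevate, Finset.mem_insert, Finset.mem_map] at hmem
    rcases hmem with rfl | ⟨d, -, rfl⟩
    · exact absurd outer hc
    · exact Set.mem_range_self d
  · rintro ⟨support, vanish⟩ c hc
    by_contra hfc
    obtain ⟨d, rfl⟩ := support hfc
    exact hfc (vanish d (mt (hl.shiftChord_mem_chords_elevate_iff d).2 hc))

theorem forall_not_nestedIn_shiftChord_iff (hl : IsDyckWord l) (c : ℕ × ℕ) :
    (∀ c' ∈ chords (elevate l), ¬ NestedIn c' (shiftChord c)) ↔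
      ∀ c' ∈ chords l, ¬ NestedIn c' c := by
  simp only [hl.forall_mem_chords_elevate_iff, not_nestedIn_zero, not_false_eq_true, true_and,
    nestedIn_shiftChord_iff]

theorem mem_lsLabellings_elevate_iff_of_outer_eq_zero (hl : IsDyckWord l) {f : ℕ × ℕ → ℕ}
    (outer : f (0, l.length + 1) = 0) :
    f ∈ LSLabellings (elevate l) ↔
      Function.support f ⊆ Set.range shiftChord ∧ f ∘ shiftChord ∈ LSLabellings l := by
  have monotone : (∀ c ∈ chords (elevate l), ∀ c' ∈ chords (elevate l),
      NestedIn c' c → f c ≤ f c') ↔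
      ∀ c ∈ chords l, ∀ c' ∈ chords l, NestedIn c' c → f (shiftChord c) ≤ f (shiftChord c') := by
    simp only [hl.forall_mem_chords_elevate_iff, outer, not_nestedIn_zero,
      nestedIn_shiftChord_iff, Nat.zero_le, implies_true, false_implies, true_and]
  have bounded : (∀ c ∈ chords (elevate l), (∀ c' ∈ chords (elevate l), ¬ NestedIn c' c) →
      f c ≤ cap (elevate l) c) ↔
      ∀ c ∈ chords l, (∀ c' ∈ chords l, ¬ NestedIn c' c) → f (shiftChord c) ≤ cap l c := by
    rw [hl.forall_mem_chords_elevate_iff, outer]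
    simp only [Nat.zero_le, implies_true, true_and, hl.forall_not_nestedIn_shiftChord_iff]
    exact forall₂_congr fun c hc => by rw [cap_elevate_shiftChord hc]
  simp only [LSLabellings, Set.mem_ofPred_eq, hl.vanishes_off_chords_elevate_iff outer, monotone,
    bounded, Function.comp_apply, and_assoc]

theorem lsLabellings_elevate (hl : IsDyckWord l) :
    LSLabellings (elevate l) =
      {f | Function.support f ⊆ Set.range shiftChord ∧ f ∘ shiftChord ∈ LSLabellings l} := by
  ext f
  by_cases outer : f (0, l.length + 1) = 0
  · exact hl.mem_lsLabellings_elevate_iff_of_outer_eq_zero outer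
  · refine iff_of_false (mt hl.labelling_outer_eq_zero outer) fun h => ?_
    obtain ⟨c, hc⟩ := h.1 outer
    exact shiftChord_ne_zero_left c _ hc

theorem sum_chords_elevate (hl : IsDyckWord l) {f : ℕ × ℕ → ℕ}
    (hf : f ∈ LSLabellings (elevate l)) :
    ∑ c ∈ chords (elevate l), f c = ∑ c ∈ chords l, f (shiftChord c) := by
  have outer_notMem : (0, l.length + 1) ∉ (chords l).map shiftChord := by
    simp [shiftChord_ne_zero_left]
  rw [hl.chords_elevate, Finset.sum_insert outer_notMem, hl.labelling_outer_eq_zero hf, zero_add,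
    Finset.sum_map]

end IsDyckWord

/-- Paper's Lemma `treedel`: the LS generating polynomial of `UλD` equals that of `λ`. -/
theorem stmt_9 (n : ℕ) (l : List Bool) (hd : IsDyckWord l) (hlen : l.length = 2 * n) :
    PLS (true :: (l ++ [false])) = PLS l := by
  have restriction : Set.BijOn (· ∘ shiftChord) (LSLabellings (elevate l)) (LSLabellings l) :=
    hd.lsLabellings_elevate ▸ bijOn_comp_of_injective shiftChord.injective (LSLabellings l)
  exact finsum_mem_eq_of_bijOn _ restriction fun f hf =>
    congrArg (Polynomial.X ^ ·) (hd.sum_chords_elevate hf)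
end
end
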